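/- Let η > 0, κ ∈ ℝ^{n×n} with κ_ij > 0, r, c ∈ Δ^n, U ∈ ℝ^{d×k}, and consider the Sinkhorn iterates α^{(ℓ)}, β^{(ℓ)}, π^{(ℓ)} defined by: ζ^{(ℓ)} = ζ_η((α^{(ℓ)}, β^{(ℓ)}, U), κ), α^{(ℓ+1)} = α^{(ℓ)} − η log r + η log(ζ^{(ℓ)}1); ζ^{(ℓ+1/2)} = ζ_η((α^{(ℓ+1)}, β^{(ℓ)}, U), κ), β^{(ℓ+1)} = β^{(ℓ)} − η log c + η log((ζ^{(ℓ+1/2)})^T 1); π^{(ℓ)} = ζ^{(ℓ)}/‖ζ^{(ℓ)}‖₁. Suppose (α*, β*) is a global minimizer of (α,β) ↦ L_η((α,β,U),κ), and R > 0 satisfies ‖α^{(ℓ)}‖_var ≤ R for all ℓ ≥ 1 and ‖α*‖_var ≤ R. Then for every ℓ ≥ 0, ‖π^{(ℓ+1)}1 − r‖₁ ≤ (2R/η)/(ℓ + √2 − 1). Consequently, for any θ > 0, the condition ‖π^{(ℓ+1)}1 − r‖₁ ≤ θ is reached after at most ⌈2R/(ηθ) + 2 − √2⌉ Sinkhorn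 iterations. -/

import Mathlib

open scoped BigOperators
open Matrix

noncomputable section

namespace PRWPaper

/-- Squared Euclidean norm of a vector in `ℝ^d`. -/
def sqnorm {d : ℕ} (v : Fin d → ℝ) : ℝ := ∑ l, (v l) ^ 2

/-- `‖Uᵀ w‖²  = ⟨w wᵀ, U Uᵀ⟩` for `U ∈ ℝ^{d×k}`, `w ∈ ℝ^d`. -/
def projSq {d k : ℕ} (U : Matrix (Fin d) (Fin k) ℝ) (w : Fin d → ℝ) : ℝ :=
  ∑ m, (∑ l, U l m * w l) ^ 2

/-- `C_ij = ‖x_i - y_j‖²`. -/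
def costC {n d : ℕ} (x y : Fin n → Fin d → ℝ) (i j : Fin n) : ℝ :=
  sqnorm (fun l => x i l - y j l)

/-- `[C(U)]_ij = ‖Uᵀ (x_i - y_j)‖² = ⟨M_ij, U Uᵀ⟩`. -/
def costCU {n d k : ℕ} (x y : Fin n → Fin d → ℝ) (U : Matrix (Fin d) (Fin k) ℝ)
    (i j : Fin n) : ℝ :=
  projSq U (fun l => x i l - y j l)

/-- `‖C‖_∞ = max_{i,j} |C_ij|`. -/
def CInf {n d : ℕ} (x y : Fin n → Fin d → ℝ) : ℝ :=
  ⨆ p : Fin n × Fin n, |costC x y p.1 p.2|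

/-- `φ_ij(α, β, U) = α_i + β_j + ⟨M_ij, U Uᵀ⟩`. -/
def phi {n d k : ℕ} (x y : Fin n → Fin d → ℝ) (α β : Fin n → ℝ)
    (U : Matrix (Fin d) (Fin k) ℝ) (i j : Fin n) : ℝ :=
  α i + β j + costCU x y U i j

/-- `min_{i,j} φ_ij(α, β, U)`. -/
def phiMin {n d k : ℕ} (x y : Fin n → Fin d → ℝ) (α β : Fin n → ℝ)
    (U : Matrix (Fin d) (Fin k) ℝ) : ℝ :=
  ⨅ p : Fin n × Fin n, phi x y α β U p.1 p.2

/-- Membership in the (relatively open) simplex `Δ^n`. -/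
def inSimplex {n : ℕ} (r : Fin n → ℝ) : Prop :=
  (∑ i, r i) = 1 ∧ ∀ i, 0 < r i

/-- Membership in the transportation polytope `Π(r, c)`. -/
def inPlans {n : ℕ} (r c : Fin n → ℝ) (π : Matrix (Fin n) (Fin n) ℝ) : Prop :=
  (∀ i, ∑ j, π i j = r i) ∧ (∀ j, ∑ i, π i j = c j) ∧ ∀ i j, 0 ≤ π i j

/-- `ℓ₁` norm of a matrix. -/
def l1norm {n : ℕ} (A : Matrix (Fin n) (Fin n) ℝ) : ℝ := ∑ i, ∑ j, |A i j|

/-- `ζ_η(x, κ)_ij = κ_ij exp(-φ_ij(x)/η)`. -/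
def zeta {n d k : ℕ} (η : ℝ) (κ : Matrix (Fin n) (Fin n) ℝ) (x y : Fin n → Fin d → ℝ)
    (α β : Fin n → ℝ) (U : Matrix (Fin d) (Fin k) ℝ) : Matrix (Fin n) (Fin n) ℝ :=
  fun i j => κ i j * Real.exp (-(phi x y α β U i j) / η)

/-- `L_η((α,β,U), κ) = rᵀα + cᵀβ + η log ‖ζ_η((α,β,U),κ)‖₁`. -/
def Lfun {n d k : ℕ} (η : ℝ) (κ : Matrix (Fin n) (Fin n) ℝ) (r c : Fin n → ℝ)
    (x y : Fin n → Fin d → ℝ) (α β : Fin n → ℝ) (U : Matrix (Fin d) (Fin k) ℝ) : ℝ :=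
  (∑ i, r i * α i) + (∑ j, c j * β j) + η * Real.log (l1norm (zeta η κ x y α β U))

/-- `π_η(x, κ) = ζ_η(x,κ)/‖ζ_η(x,κ)‖₁`. -/
def piEta {n d k : ℕ} (η : ℝ) (κ : Matrix (Fin n) (Fin n) ℝ) (x y : Fin n → Fin d → ℝ)
    (α β : Fin n → ℝ) (U : Matrix (Fin d) (Fin k) ℝ) : Matrix (Fin n) (Fin n) ℝ :=
  fun i j => zeta η κ x y α β U i j / l1norm (zeta η κ x y α β U)

/-- Entropy `H(π) = -Σ_ij π_ij log π_ij` (with the convention `0 log 0 = 0`,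
which holds since `Real.log 0 = 0`). -/
def entropy {n : ℕ} (π : Matrix (Fin n) (Fin n) ℝ) : ℝ :=
  -∑ i, ∑ j, π i j * Real.log (π i j)

/-- `h(π, U) = ⟨C(U) - η log κ, π⟩ - η H(π)`. -/
def hObj {n d k : ℕ} (η : ℝ) (κ : Matrix (Fin n) (Fin n) ℝ) (x y : Fin n → Fin d → ℝ)
    (U : Matrix (Fin d) (Fin k) ℝ) (π : Matrix (Fin n) (Fin n) ℝ) : ℝ :=
  (∑ i, ∑ j, (costCU x y U i j - η * Real.log (κ i j)) * π i j) - η * entropy π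

/-- `‖π 1 - r‖₁`, the row-sum feasibility residual. -/
def rowRes {n : ℕ} (r : Fin n → ℝ) (π : Matrix (Fin n) (Fin n) ℝ) : ℝ :=
  ∑ i, |(∑ j, π i j) - r i|

/-- `‖πᵀ 1 - c‖₁`, the column-sum feasibility residual. -/
def colRes {n : ℕ} (c : Fin n → ℝ) (π : Matrix (Fin n) (Fin n) ℝ) : ℝ :=
  ∑ j, |(∑ i, π i j) - c j|

/-- Variation seminorm `‖v‖_var = max_i v_i - min_i v_i` of a vector. -/
def varVec {n : ℕ} (v : Fin n → ℝ) : ℝ := (⨆ i, v i) - (⨅ i, v i)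

/-- `‖log κ‖_var = max_{ij} log κ_ij - min_{ij} log κ_ij`. -/
def varLog {n : ℕ} (κ : Matrix (Fin n) (Fin n) ℝ) : ℝ :=
  (⨆ p : Fin n × Fin n, Real.log (κ p.1 p.2)) - (⨅ p : Fin n × Fin n, Real.log (κ p.1 p.2))

/-- `‖log κ‖_∞ = max_{ij} |log κ_ij|`. -/
def logInf {n : ℕ} (κ : Matrix (Fin n) (Fin n) ℝ) : ℝ :=
  ⨆ p : Fin n × Fin n, |Real.log (κ p.1 p.2)|

/-- Frobenius norm of a matrix. -/
def frobNorm {d k : ℕ} (A : Matrix (Fin d) (Fin k) ℝ) : ℝ :=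
  Real.sqrt (∑ l, ∑ m, (A l m) ^ 2)

/-- `V_π = Σ_ij π_ij M_ij` with `M_ij = (x_i - y_j)(x_i - y_j)ᵀ`. -/
def Vmat {n d : ℕ} (x y : Fin n → Fin d → ℝ) (π : Matrix (Fin n) (Fin n) ℝ) :
    Matrix (Fin d) (Fin d) ℝ :=
  fun l l' => ∑ i, ∑ j, π i j * ((x i l - y j l) * (x i l' - y j l'))

/-- Projection onto the tangent space of the Stiefel manifold at `U`:
`Proj_{T_U S}(A) = A - U (UᵀA + AᵀU)/2`. -/
def projTan {d k : ℕ} (U A : Matrix (Fin d) (Fin k) ℝ) : Matrix (Fin d) (Fin k) ℝ :=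
  A - (1 / 2 : ℝ) • (U * (Uᵀ * A + Aᵀ * U))

/-- Transport plan `(u_i A_ij v_j)_{ij}` normalized to total mass one. -/
def sinkMat {n : ℕ} (A : Matrix (Fin n) (Fin n) ℝ) (u v : Fin n → ℝ) :
    Matrix (Fin n) (Fin n) ℝ :=
  fun i j => u i * A i j * v j / (∑ i', ∑ j', u i' * A i' j' * v j')

/-- A rational lower bound for the logarithm, exact to third order at `1`. -/
lemma rational_le_log {t : ℝ} (ht : 0 < t) :
    (t - 1) * (5 * t + 1) / (2 * t * (t + 2)) ≤ Real.log t := by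
  set f : ℝ → ℝ := fun s => Real.log s - (s - 1) * (5 * s + 1) / (2 * s * (s + 2)) with hf
  have hd : ∀ s : ℝ, 0 < s → HasDerivAt f ((s - 1) ^ 3 / (s ^ 2 * (s + 2) ^ 2)) s := by
    intro s hs
    have hnum : HasDerivAt (fun s : ℝ => (s - 1) * (5 * s + 1)) (10 * s - 4) s := by
      convert! ((hasDerivAt_id s).sub_const 1).mul
        (((hasDerivAt_id s).const_mul 5).add_const 1) using 1
      simp only [id]; ring
    have hden : HasDerivAt (fun s : ℝ => 2 * s * (s + 2)) (4 * s + 4) s := by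
      convert! ((hasDerivAt_id s).const_mul 2).mul ((hasDerivAt_id s).add_const 2) using 1
      simp only [id]; ring
    convert! (Real.hasDerivAt_log hs.ne').sub (hnum.div hden (by positivity)) using 1
    field_simp
    ring
  have h1 : f 1 = 0 := by simp [hf]
  have hcont : ContinuousOn f (Set.Ioi 0) := fun s hs => (hd s hs).continuousAt.continuousWithinAt
  have key : 0 ≤ f t := by
    rw [← h1]
    rcases le_total t 1 with h | h
    · refine antitoneOn_of_deriv_nonpos (convex_Icc t 1)
        (hcont.mono fun s hs => ht.trans_le hs.1) (fun s hs => ?_) (fun s hs => ?_)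
        (Set.left_mem_Icc.2 h) (Set.right_mem_Icc.2 h) h
      all_goals
        rw [interior_Icc] at hs
        have hs0 : 0 < s := ht.trans hs.1
      · exact (hd s hs0).differentiableAt.differentiableWithinAt
      · rw [(hd s hs0).deriv]
        exact div_nonpos_of_nonpos_of_nonneg
          (Odd.pow_nonpos (by decide) (by linarith [hs.2])) (by positivity)
    · refine monotoneOn_of_deriv_nonneg (convex_Icc 1 t)
        (hcont.mono fun s hs => zero_lt_one.trans_le hs.1) (fun s hs => ?_) (fun s hs => ?_)
        (Set.left_mem_Icc.2 h) (Set.right_mem_Icc.2 h) h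
      all_goals
        rw [interior_Icc] at hs
        have hs0 : 0 < s := zero_lt_one.trans hs.1
      · exact (hd s hs0).differentiableAt.differentiableWithinAt
      · rw [(hd s hs0).deriv]
        exact div_nonneg (pow_nonneg (by linarith [hs.1]) 3) (by positivity)
  simpa [hf] using key

/-- Pinsker's inequality for finite distributions with full support. -/
lemma pinsker {ι : Type*} [Fintype ι] {r p : ι → ℝ} (hr : ∀ i, 0 < r i) (hp : ∀ i, 0 < p i)
    (hrs : ∑ i, r i = 1) (hps : ∑ i, p i = 1) :
    (∑ i, |p i - r i|) ^ 2 ≤ 2 * ∑ i, r i * (Real.log (r i) - Real.log (p i)) := by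
  have hpt : ∀ i, |p i - r i| ^ 2 / (r i + 2 * p i) * 3
      ≤ 2 * (r i * (Real.log (r i) - Real.log (p i))) - 2 * r i + 2 * p i := by
    intro i
    have hri := hr i
    have hpi := hp i
    have h := mul_le_mul_of_nonneg_left (rational_le_log (div_pos hri hpi)) hri.le
    rw [Real.log_div hri.ne' hpi.ne'] at h
    have e : r i * ((r i / p i - 1) * (5 * (r i / p i) + 1) /
        (2 * (r i / p i) * (r i / p i + 2)))
        = |p i - r i| ^ 2 / (r i + 2 * p i) * (3 / 2) + r i - p i := by
      rw [sq_abs]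
      field_simp
      ring
    linarith
  have hsum := Finset.sum_le_sum fun i (_ : i ∈ Finset.univ) => hpt i
  rw [Finset.sum_add_distrib, Finset.sum_sub_distrib, ← Finset.sum_mul, ← Finset.mul_sum,
    ← Finset.mul_sum, ← Finset.mul_sum, hrs, hps] at hsum
  have hcs := Finset.sq_sum_div_le_sum_sq_div Finset.univ (fun i => |p i - r i|)
    (g := fun i => r i + 2 * p i) fun i _ => by have := hr i; have := hp i; positivity
  rw [Finset.sum_add_distrib, ← Finset.mul_sum, hrs, hps] at hcs
  linarith

/-- A quadratic decrease of the gap `δ`, together with monotonicity of the residual `e`,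
yields a rate `2 / (k + 1)` for the residual. -/
lemma residual_rate {δ e : ℕ → ℝ} (hδ : ∀ k, 0 ≤ δ k) (hδe : ∀ k, δ k ≤ e k)
    (he : Antitone e) (he0 : e 0 ≤ 1)
    (hdec : ∀ k, (e k ^ 2 + e (k + 1) ^ 2) / 2 ≤ δ k - δ (k + 1)) (k : ℕ) :
    e k * (k + 1) ≤ 2 := by
  have hgap : ∀ m : ℕ, (m + 1) * δ m ≤ 1 := by
    intro m
    induction m with
    | zero => simpa using (hδe 0).trans he0
    | succ m ih =>
      have h1 := pow_le_pow_left₀ (hδ m) (hδe m) 2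
      have h2 := pow_le_pow_left₀ (hδ (m + 1)) (hδe (m + 1)) 2
      have h3 : δ (m + 1) * (1 + δ m) ≤ δ m := by
        nlinarith [hdec m, sq_nonneg (δ m - δ (m + 1))]
      have h4 : (m + 2) * δ (m + 1) * (1 + δ m) ≤ 1 * (1 + δ m) := by
        nlinarith [mul_le_mul_of_nonneg_left h3 (by positivity : (0 : ℝ) ≤ m + 2)]
      have := le_of_mul_le_mul_right h4 (by linarith [hδ m])
      push_cast
      linarith
  have hek : 0 ≤ e k := (hδ k).trans (hδe k)
  have htel : ∀ j m : ℕ, m + j = k → (j + 1 / 2) * e k ^ 2 ≤ δ m := by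
    intro j
    induction j with
    | zero =>
      rintro m rfl
      have := hdec m
      have := hδ (m + 1)
      have := sq_nonneg (e (m + 1))
      simp only [add_zero, CharP.cast_eq_zero]
      linarith
    | succ j ih =>
      intro m hm
      have h1 := ih (m + 1) (by omega)
      have h2 := pow_le_pow_left₀ hek (he (by omega : m ≤ k)) 2
      have h3 := pow_le_pow_left₀ hek (he (by omega : m + 1 ≤ k)) 2
      have := hdec m
      push_cast
      linarith
  have hprod : ∀ m j : ℕ, m + j = k → (m + 1) * (j + 1 / 2) * e k ^ 2 ≤ 1 := by
    intro m j h
    have := mul_le_mul_of_nonneg_left (htel j m h) (by positivity : (0 : ℝ) ≤ m + 1)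
    linarith [hgap m]
  have hsq : (e k * (k + 1)) ^ 2 ≤ 2 ^ 2 := by
    obtain ⟨m, hm | hm⟩ := Nat.even_or_odd' k
    · have h := hprod m m (by omega)
      have hk : (k : ℝ) = 2 * m := by exact_mod_cast hm
      rw [hk]
      nlinarith [mul_nonneg (Nat.cast_nonneg (α := ℝ) m) (sq_nonneg (e k)), sq_nonneg (e k)]
    · have h := hprod m (m + 1) (by omega)
      have hk : (k : ℝ) = 2 * m + 1 := by exact_mod_cast hm
      push_cast at h
      rw [hk]
      nlinarith [mul_nonneg (Nat.cast_nonneg (α := ℝ) m) (sq_nonneg (e k)), sq_nonneg (e k)]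
  exact le_of_sq_le_sq hsq (by norm_num)

/-- Rescaling the columns of a nonnegative matrix moves its row sums no further
than its column sums, in `ℓ₁`. -/
lemma sum_abs_rescale_le {ι κ : Type*} [Fintype ι] [Fintype κ] {A B : ι → κ → ℝ}
    (hA : ∀ i j, 0 ≤ A i j) (q c : κ → ℝ) (hq : ∀ j, 0 < q j)
    (hAq : ∀ j, ∑ i, A i j = q j) (hB : ∀ i j, B i j = A i j * (c j / q j)) :
    ∑ i, |∑ j, B i j - ∑ j, A i j| ≤ ∑ j, |q j - c j| := by
  calc ∑ i, |∑ j, B i j - ∑ j, A i j|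
      ≤ ∑ i, ∑ j, A i j * (|q j - c j| / q j) := by
        refine Finset.sum_le_sum fun i _ => ?_
        rw [← Finset.sum_sub_distrib]
        refine (Finset.abs_sum_le_sum_abs _ _).trans (Finset.sum_le_sum fun j _ => le_of_eq ?_)
        have : B i j - A i j = A i j * ((c j - q j) / q j) := by
          rw [hB]
          have := (hq j).ne'
          field_simp
        rw [this, abs_mul, abs_of_nonneg (hA i j), abs_div, abs_of_pos (hq j), abs_sub_comm]
    _ = ∑ j, |q j - c j| := by
        rw [Finset.sum_comm]
        refine Finset.sum_congr rfl fun j _ => ?_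
        rw [← Finset.sum_mul, hAq]
        have := (hq j).ne'
        field_simp

/-- Pairing a zero-sum weight with a difference of vectors of variation at most `R`. -/
lemma sum_mul_sub_le_of_varVec_le {n : ℕ} {w a b : Fin n → ℝ} {R : ℝ} (hw : ∑ i, w i = 0)
    (ha : varVec a ≤ R) (hb : varVec b ≤ R) :
    ∑ i, w i * (a i - b i) ≤ R * ∑ i, |w i| := by
  unfold varVec at ha hb
  have hbd : ∀ v : Fin n → ℝ, BddAbove (Set.range v) ∧ BddBelow (Set.range v) := fun v =>
    ⟨(Set.finite_range v).bddAbove, (Set.finite_range v).bddBelow⟩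
  set m := ((⨆ i, a i) + ⨅ i, a i) / 2 - ((⨆ i, b i) + ⨅ i, b i) / 2 with hm
  have hshift : ∑ i, w i * (a i - b i) = ∑ i, w i * (a i - b i - m) := by
    simp only [mul_sub _ _ m, Finset.sum_sub_distrib, ← Finset.sum_mul, hw, zero_mul, sub_zero]
  rw [hshift, Finset.mul_sum]
  refine Finset.sum_le_sum fun i _ => ?_
  have habs : |a i - b i - m| ≤ R := by
    have := le_ciSup (hbd a).1 i
    have := ciInf_le (hbd a).2 i
    have := le_ciSup (hbd b).1 i
    have := ciInf_le (hbd b).2 i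
    rw [abs_le]
    constructor <;> linarith
  calc w i * (a i - b i - m) ≤ |w i * (a i - b i - m)| := le_abs_self _
    _ = |a i - b i - m| * |w i| := by rw [abs_mul, mul_comm]
    _ ≤ R * |w i| := mul_le_mul_of_nonneg_right habs (abs_nonneg _)

section Sinkhorn

variable {n d k : ℕ} {η : ℝ} {κ : Matrix (Fin n) (Fin n) ℝ} {x y : Fin n → Fin d → ℝ}
  {U : Matrix (Fin d) (Fin k) ℝ}

lemma zeta_pos (hκ : ∀ i j, 0 < κ i j) (α β : Fin n → ℝ) (i j : Fin n) :
    0 < zeta η κ x y α β U i j :=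
  mul_pos (hκ i j) (Real.exp_pos _)

lemma l1norm_zeta (hκ : ∀ i j, 0 < κ i j) (α β : Fin n → ℝ) :
    l1norm (zeta η κ x y α β U) = ∑ i, ∑ j, zeta η κ x y α β U i j :=
  Finset.sum_congr rfl fun i _ => Finset.sum_congr rfl fun j _ =>
    abs_of_pos (zeta_pos hκ α β i j)

lemma zeta_shift (α β α' β' : Fin n → ℝ) (i j : Fin n) :
    zeta η κ x y α' β' U i j = zeta η κ x y α β U i j *
      Real.exp (-((α' i - α i) + (β' j - β j)) / η) := by
  unfold zeta phi
  rw [mul_assoc, ← Real.exp_add]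
  congr 2
  ring

lemma exp_neg_log_step (hη : 0 < η) {a b s t : ℝ} (hs : 0 < s) (ht : 0 < t)
    (h : b = a - η * Real.log s + η * Real.log t) : Real.exp (-(b - a) / η) = s / t := by
  have : -(b - a) / η = Real.log s - Real.log t := by
    rw [h]
    field_simp
    ring
  rw [this, Real.exp_sub, Real.exp_log hs, Real.exp_log ht]

/-- Convexity of the dual objective, at a point whose plan has mass one and column sums `c`. -/
lemma Lfun_sub_le (hη : 0 < η) (hκ : ∀ i j, 0 < κ i j) {r c α β αs βs : Fin n → ℝ}
    (hmass : ∑ i, ∑ j, zeta η κ x y α β U i j = 1)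
    (hcol : ∀ j, ∑ i, zeta η κ x y α β U i j = c j) :
    Lfun η κ r c x y α β U - Lfun η κ r c x y αs βs U
      ≤ ∑ i, (r i - ∑ j, zeta η κ x y α β U i j) * (α i - αs i) := by
  set A := zeta η κ x y α β U with hA
  set z : Fin n → Fin n → ℝ := fun i j => -((αs i - α i) + (βs j - β j)) / η with hz
  have hJ : Real.exp (∑ i, ∑ j, A i j * z i j) ≤ l1norm (zeta η κ x y αs βs U) := by
    have h := convexOn_exp.map_sum_le (t := (Finset.univ : Finset (Fin n × Fin n)))
      (w := fun p => A p.1 p.2) (p := fun p => z p.1 p.2)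
      (fun p _ => (zeta_pos hκ α β p.1 p.2).le)
      (by rw [Fintype.sum_prod_type]; exact hmass) (fun _ _ => Set.mem_univ _)
    simp only [smul_eq_mul, Fintype.sum_prod_type] at h
    rw [l1norm_zeta hκ]
    refine h.trans (le_of_eq ?_)
    exact Finset.sum_congr rfl fun i _ => Finset.sum_congr rfl fun j _ =>
      (zeta_shift α β αs βs i j).symm
  have hlog := (Real.le_log_iff_exp_le ((Real.exp_pos _).trans_le hJ)).2 hJ
  have hlin : η * ∑ i, ∑ j, A i j * z i j
      = ∑ i, (∑ j, A i j) * (α i - αs i) + ∑ j, c j * (β j - βs j) := by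
    have e : ∀ i j, η * (A i j * z i j) = A i j * (α i - αs i) + A i j * (β j - βs j) := by
      intro i j
      simp only [hz]
      field_simp
      ring
    simp only [Finset.mul_sum, e, Finset.sum_add_distrib, ← Finset.sum_mul]
    congr 1
    rw [Finset.sum_comm]
    exact Finset.sum_congr rfl fun j _ => by rw [← hcol, Finset.sum_mul]
  have hm := mul_le_mul_of_nonneg_left hlog hη.le
  unfold Lfun
  rw [← hA, l1norm_zeta hκ α β, ← hA, hmass, Real.log_one]
  simp only [sub_mul, mul_sub, Finset.sum_sub_distrib] at hlin ⊢
  linarith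

end Sinkhorn

/-- Lemma 4.4: iteration complexity of the Sinkhorn iteration. -/
theorem statement13 (n d k : ℕ) (hn : 1 ≤ n) (η : ℝ) (hη : 0 < η)
    (κ : Matrix (Fin n) (Fin n) ℝ) (hκ : ∀ i j, 0 < κ i j)
    (r c : Fin n → ℝ) (hr : inSimplex r) (hc : inSimplex c)
    (x y : Fin n → Fin d → ℝ) (U : Matrix (Fin d) (Fin k) ℝ)
    (α β : ℕ → Fin n → ℝ)
    (hα : ∀ (ℓ : ℕ) (i : Fin n), α (ℓ + 1) i = α ℓ i - η * Real.log (r i)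
        + η * Real.log (∑ j, zeta η κ x y (α ℓ) (β ℓ) U i j))
    (hβ : ∀ (ℓ : ℕ) (j : Fin n), β (ℓ + 1) j = β ℓ j - η * Real.log (c j)
        + η * Real.log (∑ i, zeta η κ x y (α (ℓ + 1)) (β ℓ) U i j))
    (αs βs : Fin n → ℝ)
    (hmin : ∀ α' β' : Fin n → ℝ, Lfun η κ r c x y αs βs U ≤ Lfun η κ r c x y α' β' U)
    (R : ℝ) (hR : 0 < R)
    (hvar : ∀ ℓ : ℕ, 1 ≤ ℓ → varVec (α ℓ) ≤ R) (hvars : varVec αs ≤ R) :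
    (∀ ℓ : ℕ, rowRes r (piEta η κ x y (α (ℓ + 1)) (β (ℓ + 1)) U)
        ≤ (2 * R / η) / ((ℓ : ℝ) + Real.sqrt 2 - 1))
    ∧ ∀ θ : ℝ, 0 < θ →
        ∃ ℓ : ℕ, ℓ + 1 ≤ Nat.ceil (2 * R / (η * θ) + 2 - Real.sqrt 2)
          ∧ rowRes r (piEta η κ x y (α (ℓ + 1)) (β (ℓ + 1)) U) ≤ θ := by
  have hne : Nonempty (Fin n) := ⟨⟨0, hn⟩⟩
  obtain ⟨hr1, hr0⟩ := hr
  obtain ⟨hc1, hc0⟩ := hc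
  set A : ℕ → Fin n → Fin n → ℝ := fun ℓ => zeta η κ x y (α ℓ) (β ℓ) U with hA
  set B : ℕ → Fin n → Fin n → ℝ := fun ℓ => zeta η κ x y (α (ℓ + 1)) (β ℓ) U with hB
  set p : ℕ → Fin n → ℝ := fun ℓ i => ∑ j, A ℓ i j with hp
  set q : ℕ → Fin n → ℝ := fun ℓ j => ∑ i, B ℓ i j with hq
  have hA0 : ∀ ℓ i j, 0 < A ℓ i j := fun ℓ => zeta_pos hκ _ _
  have hB0 : ∀ ℓ i j, 0 < B ℓ i j := fun ℓ => zeta_pos hκ _ _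
  have hp0 : ∀ ℓ i, 0 < p ℓ i := fun ℓ i =>
    Finset.sum_pos (fun j _ => hA0 ℓ i j) Finset.univ_nonempty
  have hq0 : ∀ ℓ j, 0 < q ℓ j := fun ℓ j =>
    Finset.sum_pos (fun i _ => hB0 ℓ i j) Finset.univ_nonempty
  have hBA : ∀ ℓ i j, B ℓ i j = A ℓ i j * (r i / p ℓ i) := by
    intro ℓ i j
    rw [← exp_neg_log_step hη (hr0 i) (hp0 ℓ i) (hα ℓ i)]
    simp only [hA, hB]
    rw [zeta_shift (α ℓ) (β ℓ) (α (ℓ + 1)) (β ℓ), sub_self, add_zero]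
  have hAB : ∀ ℓ i j, A (ℓ + 1) i j = B ℓ i j * (c j / q ℓ j) := by
    intro ℓ i j
    rw [← exp_neg_log_step hη (hc0 j) (hq0 ℓ j) (hβ ℓ j)]
    simp only [hA, hB]
    rw [zeta_shift (α (ℓ + 1)) (β ℓ) (α (ℓ + 1)) (β (ℓ + 1)), sub_self, zero_add]
  have hBrow : ∀ ℓ i, ∑ j, B ℓ i j = r i := by
    intro ℓ i
    simp only [hBA, ← Finset.sum_mul]
    exact mul_div_cancel₀ _ (hp0 ℓ i).ne'
  have hAcol : ∀ ℓ j, ∑ i, A (ℓ + 1) i j = c j := by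
    intro ℓ j
    simp only [hAB, ← Finset.sum_mul]
    exact mul_div_cancel₀ _ (hq0 ℓ j).ne'
  have hAmass : ∀ ℓ, ∑ i, ∑ j, A (ℓ + 1) i j = 1 := by
    intro ℓ
    rw [Finset.sum_comm]
    simp only [hAcol, hc1]
  have hq1 : ∀ ℓ, ∑ j, q ℓ j = 1 := by
    intro ℓ
    simp only [hq]
    rw [Finset.sum_comm]
    simp only [hBrow, hr1]
  have hp1 : ∀ ℓ, ∑ i, p (ℓ + 1) i = 1 := hAmass
  set e : ℕ → ℝ := fun ℓ => ∑ i, |p (ℓ + 1) i - r i| with he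
  have hres : ∀ ℓ, rowRes r (piEta η κ x y (α (ℓ + 1)) (β (ℓ + 1)) U) = e ℓ := by
    intro ℓ
    have h1 : l1norm (zeta η κ x y (α (ℓ + 1)) (β (ℓ + 1)) U) = 1 :=
      (l1norm_zeta hκ _ _).trans (hAmass ℓ)
    simp only [rowRes, piEta, h1, div_one, he, hp, hA]
  set f : ℕ → ℝ := fun ℓ => ∑ j, |q (ℓ + 1) j - c j| with hf
  have hfe : ∀ ℓ, f ℓ ≤ e ℓ := by
    intro ℓ
    have h := sum_abs_rescale_le (A := fun j i => A (ℓ + 1) i j) (B := fun j i => B (ℓ + 1) i j)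
      (fun j i => (hA0 _ i j).le) (p (ℓ + 1)) r (hp0 _) (fun i => rfl) (fun j i => hBA _ i j)
    simpa only [hAcol] using h
  have hef : ∀ ℓ, e (ℓ + 1) ≤ f ℓ := by
    intro ℓ
    have h := sum_abs_rescale_le (fun i j => (hB0 (ℓ + 1) i j).le) (q (ℓ + 1)) c (hq0 _)
      (fun j => rfl) (hAB (ℓ + 1))
    simpa only [hBrow] using h
  set δ : ℕ → ℝ := fun ℓ => Lfun η κ r c x y (α (ℓ + 1)) (β (ℓ + 1)) U
    - Lfun η κ r c x y αs βs U with hδ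
  have hL : ∀ ℓ, Lfun η κ r c x y (α (ℓ + 1)) (β (ℓ + 1)) U
      = ∑ i, r i * α (ℓ + 1) i + ∑ j, c j * β (ℓ + 1) j := by
    intro ℓ
    have h1 : l1norm (zeta η κ x y (α (ℓ + 1)) (β (ℓ + 1)) U) = 1 :=
      (l1norm_zeta hκ _ _).trans (hAmass ℓ)
    simp only [Lfun, h1, Real.log_one, mul_zero, add_zero]
  have hδ0 : ∀ ℓ, 0 ≤ δ ℓ := fun ℓ => sub_nonneg.2 (hmin _ _)
  have hpr0 : ∀ ℓ, ∑ i, (r i - p (ℓ + 1) i) = 0 := by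
    intro ℓ
    rw [Finset.sum_sub_distrib, hr1, hp1, sub_self]
  have hesymm : ∀ ℓ, ∑ i, |r i - p (ℓ + 1) i| = e ℓ := fun ℓ =>
    Finset.sum_congr rfl fun i _ => abs_sub_comm _ _
  have hδe : ∀ ℓ, δ ℓ ≤ R * e ℓ := by
    intro ℓ
    rw [← hesymm]
    exact (Lfun_sub_le hη hκ (hAmass ℓ) (hAcol ℓ)).trans
      (sum_mul_sub_le_of_varVec_le (hpr0 ℓ) (hvar _ (by omega)) hvars)
  have hαd : ∀ ℓ i, α (ℓ + 1) i - α (ℓ + 2) i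
      = η * (Real.log (r i) - Real.log (p (ℓ + 1) i)) := by
    intro ℓ i
    rw [hα (ℓ + 1) i]
    simp only [hp, hA]
    ring
  have hβd : ∀ ℓ j, β (ℓ + 1) j - β (ℓ + 2) j
      = η * (Real.log (c j) - Real.log (q (ℓ + 1) j)) := by
    intro ℓ j
    rw [hβ (ℓ + 1) j]
    simp only [hq, hB]
    ring
  have hdec : ∀ ℓ, η * ((e ℓ ^ 2 + e (ℓ + 1) ^ 2) / 2) ≤ δ ℓ - δ (ℓ + 1) := by
    intro ℓ
    have h1 := pinsker hr0 (hp0 (ℓ + 1)) hr1 (hp1 ℓ)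
    have h2 := pinsker hc0 (hq0 (ℓ + 1)) hc1 (hq1 (ℓ + 1))
    have h3 := pow_le_pow_left₀ (Finset.sum_nonneg fun i _ => abs_nonneg _) (hef ℓ) 2
    have hd : δ ℓ - δ (ℓ + 1)
        = η * (∑ i, r i * (Real.log (r i) - Real.log (p (ℓ + 1) i))
          + ∑ j, c j * (Real.log (c j) - Real.log (q (ℓ + 1) j))) := by
      have e1 : ∑ i, r i * α (ℓ + 1) i - ∑ i, r i * α (ℓ + 2) i
          = η * ∑ i, r i * (Real.log (r i) - Real.log (p (ℓ + 1) i)) := by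
        rw [← Finset.sum_sub_distrib, Finset.mul_sum]
        exact Finset.sum_congr rfl fun i _ => by rw [← mul_sub, hαd]; ring
      have e2 : ∑ j, c j * β (ℓ + 1) j - ∑ j, c j * β (ℓ + 2) j
          = η * ∑ j, c j * (Real.log (c j) - Real.log (q (ℓ + 1) j)) := by
        rw [← Finset.sum_sub_distrib, Finset.mul_sum]
        exact Finset.sum_congr rfl fun j _ => by rw [← mul_sub, hβd]; ring
      simp only [hδ, hL]
      linarith
    rw [hd]
    refine mul_le_mul_of_nonneg_left ?_ hη.le
    linarith
  have he0 : η * e 0 ≤ R := by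
    have h1 := pinsker hr0 (hp0 1) hr1 (hp1 0)
    have h2 := pinsker (hp0 1) hr0 (hp1 0) hr1
    rw [hesymm 0] at h2
    have h3 := sum_mul_sub_le_of_varVec_le (hpr0 0) (hvar 1 le_rfl) (hvar 2 (by omega))
    rw [hesymm 0] at h3
    have h4 : ∑ i, (r i - p 1 i) * (α 1 i - α 2 i)
        = η * (∑ i, r i * (Real.log (r i) - Real.log (p 1 i))
          + ∑ i, p 1 i * (Real.log (p 1 i) - Real.log (r i))) := by
      rw [← Finset.sum_add_distrib, Finset.mul_sum]
      exact Finset.sum_congr rfl fun i _ => by rw [hαd 0]; ring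
    have he00 : 0 ≤ e 0 := Finset.sum_nonneg fun i _ => abs_nonneg _
    have h5 : η * e 0 * e 0 ≤ R * e 0 := by
      have h6 : e 0 ^ 2 ≤ ∑ i, r i * (Real.log (r i) - Real.log (p 1 i))
          + ∑ i, p 1 i * (Real.log (p 1 i) - Real.log (r i)) := by
        have : e 0 ^ 2 ≤ 2 * ∑ i, r i * (Real.log (r i) - Real.log (p 1 i)) := h1
        linarith
      have h7 := mul_le_mul_of_nonneg_left h6 hη.le
      have h8 := h4 ▸ h3
      linarith
    rcases he00.eq_or_lt with h | h
    · rw [← h, mul_zero]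
      exact hR.le
    · exact le_of_mul_le_mul_right h5 h
  have hrate : ∀ ℓ : ℕ, e ℓ * (ℓ + 1) ≤ 2 * R / η := by
    intro ℓ
    have h := residual_rate (δ := fun m => η / R ^ 2 * δ m) (e := fun m => η / R * e m)
      (fun m => mul_nonneg (by positivity) (hδ0 m))
      (fun m => by
        have := mul_le_mul_of_nonneg_left (hδe m) (by positivity : 0 ≤ η / R ^ 2)
        refine this.trans (le_of_eq ?_)
        field_simp)
      (antitone_nat_of_succ_le fun m =>
        mul_le_mul_of_nonneg_left ((hef m).trans (hfe m)) (by positivity))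
      (by
        rw [div_mul_eq_mul_div]
        exact (div_le_one hR).2 he0)
      (fun m => by
        have := mul_le_mul_of_nonneg_left (hdec m) (by positivity : 0 ≤ η / R ^ 2)
        rw [← mul_sub]
        refine le_trans (le_of_eq ?_) this
        field_simp) ℓ
    rw [le_div_iff₀ hη]
    have := mul_le_mul_of_nonneg_left h hR.le
    field_simp at this
    linarith
  have hsqrt1 : 1 < Real.sqrt 2 := Real.lt_sqrt_of_sq_lt (by norm_num)
  have hsqrt2 : Real.sqrt 2 < 2 := (Real.sqrt_lt' (by norm_num)).2 (by norm_num)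
  have hbound : ∀ ℓ : ℕ, rowRes r (piEta η κ x y (α (ℓ + 1)) (β (ℓ + 1)) U)
      ≤ (2 * R / η) / ((ℓ : ℝ) + Real.sqrt 2 - 1) := by
    intro ℓ
    have hℓ : (0 : ℝ) ≤ ℓ := Nat.cast_nonneg ℓ
    have he0' : 0 ≤ e ℓ := Finset.sum_nonneg fun i _ => abs_nonneg _
    rw [hres, le_div_iff₀ (by linarith)]
    exact (mul_le_mul_of_nonneg_left (by linarith) he0').trans (hrate ℓ)
  refine ⟨hbound, fun θ hθ => ?_⟩
  set t := 2 * R / (η * θ) + 2 - Real.sqrt 2 with ht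
  have hX : 0 < 2 * R / (η * θ) := by positivity
  have hN : 0 < Nat.ceil t := Nat.ceil_pos.2 (by linarith)
  obtain ⟨ℓ, hℓ⟩ := Nat.exists_eq_succ_of_ne_zero hN.ne'
  refine ⟨ℓ, hℓ.ge, (hbound ℓ).trans ?_⟩
  have hle : t ≤ (ℓ : ℝ) + 1 := by
    have := Nat.le_ceil t
    rw [hℓ] at this
    exact_mod_cast this
  have hge : 2 * R / (η * θ) ≤ (ℓ : ℝ) + Real.sqrt 2 - 1 := by linarith
  rw [div_le_iff₀ (hX.trans_le hge)]
  refine le_trans (le_of_eq ?_) (mul_le_mul_of_nonneg_left hge hθ.le)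
  field_simp

end PRWPaper
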